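/- Let λ > 0 and X* ∈ L⁰₊, and define φ(a) = E[e^{−aX*}] for a ∈ [a₀,a₁] and ψ(y) = ∫_{[a₀,a₁]} e^{−ay}/φ(a) m(da) for y ∈ ℝ, so that ψ is continuous and strictly decreasing on ℝ with ψ(y) → ∞ as y → −∞ and ψ(y) → 0 as y → ∞, hence has an inverse ψ⁻¹ : (0,∞) → ℝ. Then the condition [h′(X*) + λρ ≥ 0 a.s. and h′(X*) + λρ = 0 a.s. on {X* > 0}] holds if and only if X* = max(ψ⁻¹(λρ), 0) a.s. -/

import Mathlib

/-!
Write `φ(a) = E[e^{-aX}]`. For `a ∈ [a₀,a₁]` one has `0 < φ(a₁) ≤ φ(a) ≤ 1`, so the integrand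
`e^{-ay}/φ(a)` of `ψ(y)` is bounded on `[a₀,a₁]` and at least `e^{-ay}`; hence `ψ` is finite and
positive. Everything else about `ψ` follows from the two growth estimates, for `y ≤ z`,
`e^{-a₁(z-y)} ψ(y) ≤ ψ(z) ≤ e^{-a₀(z-y)} ψ(y)` (`psi_lower`, `psi_upper`): the upper one gives
strict monotonicity and both limits, and together they squeeze `ψ` to continuity.

The intermediate value theorem then makes `ψ` a decreasing bijection `ℝ → (0,∞)`, and
`{y | ψ(x) ≤ ψ(y)} = (-∞,x]` identifies `psiInv` with its inverse. The first-order condition is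
compared with `X = max(ψ⁻¹(λρ), 0)` pointwise: with `t = ψ⁻¹(λρ)` and `h′(X) = -ψ(X)`, it says
`t ≤ X`, with equality wherever `X > 0`.
-/

open MeasureTheory Filter Set
open scoped ENNReal

noncomputable section

variable {Ω : Type*} [MeasurableSpace Ω]

/-- Entropic risk measure `h_a(X) = (1/a) log E[e^{-aX}]`. -/
def entropic (P : Measure Ω) (a : ℝ) (X : Ω → ℝ) : ℝ :=
  (1 / a) * Real.log (∫ ω, Real.exp (-a * X ω) ∂P)

/-- Weighted entropic risk measure `h(X) = ∫_{[a₀,a₁]} h_a(X) m(da)`. -/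
def werm (P : Measure Ω) (m : Measure ℝ) (a₀ a₁ : ℝ) (X : Ω → ℝ) : ℝ :=
  ∫ a in Set.Icc a₀ a₁, entropic P a X ∂m

/-- Marginal risk density transform `h′(X) = -∫_{[a₀,a₁]} e^{-aX}/E[e^{-aX}] m(da)`. -/
def hprime (P : Measure Ω) (m : Measure ℝ) (a₀ a₁ : ℝ) (X : Ω → ℝ) (ω : Ω) : ℝ :=
  -∫ a in Set.Icc a₀ a₁, Real.exp (-a * X ω) / (∫ ω', Real.exp (-a * X ω') ∂P) ∂m

/-- Extended-real-valued expectation `E[f] = ∫ f⁺ - ∫ f⁻ ∈ [-∞,∞]`. -/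
def eint (P : Measure Ω) (f : Ω → ℝ) : EReal :=
  ((∫⁻ ω, ENNReal.ofReal (f ω) ∂P : ℝ≥0∞) : EReal)
    - ((∫⁻ ω, ENNReal.ofReal (-(f ω)) ∂P : ℝ≥0∞) : EReal)

/-- `E[ρX] ∈ [0,∞]` for a nonnegative payoff. -/
def budget (P : Measure Ω) (ρ X : Ω → ℝ) : ℝ≥0∞ := ∫⁻ ω, ENNReal.ofReal (ρ ω * X ω) ∂P

/-- `X ∈ L⁰₊`: a nonnegative random variable. -/
def Lpos (P : Measure Ω) (X : Ω → ℝ) : Prop := Measurable X ∧ ∀ᵐ ω ∂P, 0 ≤ X ω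

/-- Objective of the Lagrangian risk-minimization problem: `h(X) + λ E[ρX]`. -/
def robj (P : Measure Ω) (m : Measure ℝ) (a₀ a₁ : ℝ) (ρ : Ω → ℝ) (lam : ℝ) (X : Ω → ℝ) : EReal :=
  ((werm P m a₀ a₁ X : ℝ) : EReal) + (lam : EReal) * ((budget P ρ X : ℝ≥0∞) : EReal)

/-- `ψ_X(y) = ∫_{[a₀,a₁]} e^{-ay} / E[e^{-aX}] m(da)`. -/
def psi (P : Measure Ω) (m : Measure ℝ) (a₀ a₁ : ℝ) (X : Ω → ℝ) (y : ℝ) : ℝ :=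
  ∫ a in Set.Icc a₀ a₁, Real.exp (-a * y) / (∫ ω, Real.exp (-a * X ω) ∂P) ∂m

/-- Inverse of `ψ_X` on `(0,∞)` (realized via `sSup`, since `ψ_X` is continuous, strictly
decreasing with limits `∞` at `-∞` and `0` at `∞`). -/
def psiInv (P : Measure Ω) (m : Measure ℝ) (a₀ a₁ : ℝ) (X : Ω → ℝ) (z : ℝ) : ℝ :=
  sSup {y : ℝ | z ≤ psi P m a₀ a₁ X y}

/-- The transform `𝐓X = max(ψ_X⁻¹(λρ), 0)`. -/
def Ttrans (P : Measure Ω) (m : Measure ℝ) (a₀ a₁ lam : ℝ) (ρ : Ω → ℝ) (X : Ω → ℝ) : Ω → ℝ :=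
  fun ω => max (psiInv P m a₀ a₁ X (lam * ρ ω)) 0

/-- `X ∈ 𝒳(x)`: nonnegative and `E[ρX] ≤ x`. -/
def feasible (P : Measure Ω) (ρ : Ω → ℝ) (x : ℝ) (X : Ω → ℝ) : Prop :=
  Lpos P X ∧ budget P ρ X ≤ ENNReal.ofReal x

/-- `γ₁(x)`: the minimal value of `h` over `𝒳(x)`. -/
def gamma1 (P : Measure Ω) (m : Measure ℝ) (a₀ a₁ : ℝ) (ρ : Ω → ℝ) (x : ℝ) : ℝ :=
  sInf (werm P m a₀ a₁ '' {X | feasible P ρ x X})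

/-- Expected utility `E[U(X)] ∈ [-∞,∞]`. -/
def eutil (P : Measure Ω) (U : ℝ → ℝ) (X : Ω → ℝ) : EReal := eint P (fun ω => U (X ω))

/-- Full Lagrangian objective `E[U(X)] - μ h(X) - λ E[ρX]`. -/
def fullObj (P : Measure Ω) (m : Measure ℝ) (a₀ a₁ : ℝ) (ρ : Ω → ℝ) (U : ℝ → ℝ)
    (μ lam : ℝ) (X : Ω → ℝ) : EReal :=
  eutil P U X - ((μ * werm P m a₀ a₁ X : ℝ) : EReal)
    - (lam : EReal) * ((budget P ρ X : ℝ≥0∞) : EReal)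

section PsiLemmas

variable {P : Measure Ω} [IsProbabilityMeasure P] {a₀ a₁ : ℝ} {m : Measure ℝ}
  [IsProbabilityMeasure m] {X : Ω → ℝ}

lemma integrable_exp_neg_mul (hX : Lpos P X) {a : ℝ} (ha : 0 ≤ a) :
    Integrable (fun ω => Real.exp (-a * X ω)) P := by
  refine Integrable.of_bound (C := 1) ?_ ?_
  · have := hX.1
    exact (by fun_prop : Measurable fun ω => Real.exp (-a * X ω)).aestronglyMeasurable
  · filter_upwards [hX.2] with ω hω
    rw [Real.norm_eq_abs, Real.abs_exp, Real.exp_le_one_iff]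
    nlinarith

lemma laplace_pos (hX : Lpos P X) {a : ℝ} (ha : 0 ≤ a) :
    0 < ∫ ω, Real.exp (-a * X ω) ∂P :=
  integral_exp_pos (integrable_exp_neg_mul hX ha)

lemma laplace_anti (hX : Lpos P X) {a b : ℝ} (ha : 0 ≤ a) (hab : a ≤ b) :
    ∫ ω, Real.exp (-b * X ω) ∂P ≤ ∫ ω, Real.exp (-a * X ω) ∂P := by
  refine integral_mono_ae (integrable_exp_neg_mul hX (ha.trans hab))
    (integrable_exp_neg_mul hX ha) ?_
  filter_upwards [hX.2] with ω hω
  exact Real.exp_le_exp.2 (by nlinarith)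

lemma laplace_le_one (hX : Lpos P X) {a : ℝ} (ha : 0 ≤ a) :
    ∫ ω, Real.exp (-a * X ω) ∂P ≤ 1 := by
  simpa using laplace_anti hX le_rfl ha

lemma measurable_laplace (hX : Lpos P X) :
    Measurable fun a : ℝ => ∫ ω, Real.exp (-a * X ω) ∂P := by
  have := hX.1
  have h : StronglyMeasurable fun p : ℝ × Ω => Real.exp (-p.1 * X p.2) :=
    (by fun_prop : Measurable fun p : ℝ × Ω => Real.exp (-p.1 * X p.2)).stronglyMeasurable
  exact h.integral_prod_right.measurable

lemma integrableOn_psi_integrand (ha₀ : 0 < a₀) (hX : Lpos P X) (y : ℝ) :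
    IntegrableOn (fun a => Real.exp (-a * y) / ∫ ω, Real.exp (-a * X ω) ∂P)
      (Icc a₀ a₁) m := by
  refine IntegrableOn.of_bound (measure_lt_top _ _)
    (C := Real.exp (a₁ * |y|) / ∫ ω, Real.exp (-a₁ * X ω) ∂P) ?_ ?_
  · have := measurable_laplace hX
    exact ((by fun_prop : Measurable fun a : ℝ => Real.exp (-a * y)).div
      this).aestronglyMeasurable
  · filter_upwards [ae_restrict_mem measurableSet_Icc] with a ha
    have ha' : 0 ≤ a := ha₀.le.trans ha.1
    rw [Real.norm_of_nonneg (div_nonneg (Real.exp_nonneg _) (laplace_pos hX ha').le)]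
    refine div_le_div₀ (Real.exp_nonneg _) (Real.exp_le_exp.2 ?_)
      (laplace_pos hX (ha'.trans ha.2)) (laplace_anti hX ha' ha.2)
    calc -a * y = a * (-y) := by ring
      _ ≤ a * |y| := mul_le_mul_of_nonneg_left (neg_le_abs y) ha'
      _ ≤ a₁ * |y| := mul_le_mul_of_nonneg_right ha.2 (abs_nonneg y)

lemma psi_upper (ha₀ : 0 < a₀) (hX : Lpos P X) {y z : ℝ} (hyz : y ≤ z) :
    psi P m a₀ a₁ X z ≤ Real.exp (-a₀ * (z - y)) * psi P m a₀ a₁ X y := by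
  unfold psi
  rw [← integral_const_mul]
  refine setIntegral_mono_on (integrableOn_psi_integrand ha₀ hX z)
    ((integrableOn_psi_integrand ha₀ hX y).const_mul _) measurableSet_Icc fun a ha => ?_
  rw [← mul_div_assoc, ← Real.exp_add]
  refine div_le_div_of_nonneg_right (Real.exp_le_exp.2 ?_) (laplace_pos hX (ha₀.le.trans ha.1)).le
  nlinarith [mul_le_mul_of_nonneg_right ha.1 (sub_nonneg.2 hyz)]

lemma psi_lower (ha₀ : 0 < a₀) (hX : Lpos P X) {y z : ℝ} (hyz : y ≤ z) :
    Real.exp (-a₁ * (z - y)) * psi P m a₀ a₁ X y ≤ psi P m a₀ a₁ X z := by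
  unfold psi
  rw [← integral_const_mul]
  refine setIntegral_mono_on ((integrableOn_psi_integrand ha₀ hX y).const_mul _)
    (integrableOn_psi_integrand ha₀ hX z) measurableSet_Icc fun a ha => ?_
  rw [← mul_div_assoc, ← Real.exp_add]
  refine div_le_div_of_nonneg_right (Real.exp_le_exp.2 ?_) (laplace_pos hX (ha₀.le.trans ha.1)).le
  nlinarith [mul_le_mul_of_nonneg_right ha.2 (sub_nonneg.2 hyz)]

lemma psi_pos (ha₀ : 0 < a₀) (hm : m (Icc a₀ a₁) = 1) (hX : Lpos P X) (y : ℝ) :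
    0 < psi P m a₀ a₁ X y := by
  -- At `0` the integrand is `1/φ(a) ≥ 1`; the growth estimates carry positivity to every `y`.
  have h0 : 1 ≤ psi P m a₀ a₁ X 0 := by
    have h : ∫ _ in Icc a₀ a₁, (1 : ℝ) ∂m ≤ psi P m a₀ a₁ X 0 := by
      refine setIntegral_mono_on (integrableOn_const (by simp [hm]))
        (integrableOn_psi_integrand ha₀ hX 0) measurableSet_Icc fun a ha => ?_
      have ha' : 0 ≤ a := ha₀.le.trans ha.1
      rw [mul_zero, Real.exp_zero, le_div_iff₀ (laplace_pos hX ha'), one_mul]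
      exact laplace_le_one hX ha'
    simpa [Measure.real, hm] using h
  rcases le_total 0 y with hy | hy
  · exact (mul_pos (Real.exp_pos _) (by linarith)).trans_le (psi_lower ha₀ hX hy)
  · exact pos_of_mul_pos_right ((by linarith : 0 < psi P m a₀ a₁ X 0).trans_le
      (psi_upper ha₀ hX hy)) (Real.exp_nonneg _)

lemma psi_strictAnti (ha₀ : 0 < a₀) (hm : m (Icc a₀ a₁) = 1) (hX : Lpos P X) :
    StrictAnti (psi P m a₀ a₁ X) := by
  intro y z hyz
  refine (psi_upper ha₀ hX hyz.le).trans_lt ?_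
  refine mul_lt_of_lt_one_left (psi_pos ha₀ hm hX y) (Real.exp_zero ▸ Real.exp_lt_exp.2 ?_)
  nlinarith [mul_pos ha₀ (sub_pos.2 hyz)]

lemma psi_continuous (ha₀ : 0 < a₀) (hX : Lpos P X) :
    Continuous (psi P m a₀ a₁ X) := by
  rw [continuous_iff_continuousAt]
  intro y
  -- For `z < y` the growth estimates hold with `y` and `z` exchanged, which swaps the roles of
  -- `a₀` and `a₁`; `min` and `max` cover both sides of `y` at once.
  have hlo : Tendsto (fun z => min (Real.exp (-a₁ * (z - y)) * psi P m a₀ a₁ X y)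
      (Real.exp (-a₀ * (z - y)) * psi P m a₀ a₁ X y)) (nhds y)
      (nhds (psi P m a₀ a₁ X y)) := by
    have h : Continuous (fun z => min (Real.exp (-a₁ * (z - y)) * psi P m a₀ a₁ X y)
      (Real.exp (-a₀ * (z - y)) * psi P m a₀ a₁ X y)) := by fun_prop
    simpa using h.tendsto y
  have hhi : Tendsto (fun z => max (Real.exp (-a₁ * (z - y)) * psi P m a₀ a₁ X y)
      (Real.exp (-a₀ * (z - y)) * psi P m a₀ a₁ X y)) (nhds y)
      (nhds (psi P m a₀ a₁ X y)) := by
    have h : Continuous (fun z => max (Real.exp (-a₁ * (z - y)) * psi P m a₀ a₁ X y)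
      (Real.exp (-a₀ * (z - y)) * psi P m a₀ a₁ X y)) := by fun_prop
    simpa using h.tendsto y
  have hflip : ∀ a z u v : ℝ, Real.exp (-a * (y - z)) * u ≤ v →
      u ≤ Real.exp (-a * (z - y)) * v := by
    intro a z u v h
    have h' := mul_le_mul_of_nonneg_left h (Real.exp_nonneg (-a * (z - y)))
    rwa [← mul_assoc, ← Real.exp_add, show -a * (z - y) + -a * (y - z) = 0 by ring,
      Real.exp_zero, one_mul] at h'
  have hflip' : ∀ a z u v : ℝ, v ≤ Real.exp (-a * (y - z)) * u →
      Real.exp (-a * (z - y)) * v ≤ u := by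
    intro a z u v h
    have h' := mul_le_mul_of_nonneg_left h (Real.exp_nonneg (-a * (z - y)))
    rwa [← mul_assoc, ← Real.exp_add, show -a * (z - y) + -a * (y - z) = 0 by ring,
      Real.exp_zero, one_mul] at h'
  refine tendsto_of_tendsto_of_tendsto_of_le_of_le hlo hhi (fun z => ?_) (fun z => ?_)
  · rcases le_total y z with h | h
    · exact (min_le_left _ _).trans (psi_lower ha₀ hX h)
    · exact (min_le_right _ _).trans (hflip' _ _ _ _ (psi_upper ha₀ hX h))
  · rcases le_total y z with h | h
    · exact (psi_upper ha₀ hX h).trans (le_max_right _ _)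
    · exact (hflip _ _ _ _ (psi_lower ha₀ hX h)).trans (le_max_left _ _)

lemma psi_tendsto_atBot (ha₀ : 0 < a₀) (hm : m (Icc a₀ a₁) = 1) (hX : Lpos P X) :
    Tendsto (psi P m a₀ a₁ X) atBot atTop := by
  have h1 : Tendsto (fun z : ℝ => Real.exp (-a₀ * z) * psi P m a₀ a₁ X 0) atBot atTop :=
    (Real.tendsto_exp_atTop.comp
      (tendsto_id.const_mul_atBot_of_neg (neg_neg_of_pos ha₀))).atTop_mul_const
      (psi_pos ha₀ hm hX 0)
  refine tendsto_atTop_mono' _ ?_ h1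
  filter_upwards [eventually_le_atBot 0] with z hz
  have h := mul_le_mul_of_nonneg_left (psi_upper (m := m) (a₁ := a₁) ha₀ hX hz)
    (Real.exp_nonneg (-a₀ * z))
  rwa [← mul_assoc, ← Real.exp_add, show -a₀ * z + -a₀ * (0 - z) = 0 by ring,
    Real.exp_zero, one_mul] at h

lemma psi_tendsto_atTop (ha₀ : 0 < a₀) (hm : m (Icc a₀ a₁) = 1) (hX : Lpos P X) :
    Tendsto (psi P m a₀ a₁ X) atTop (nhds 0) := by
  have h1 : Tendsto (fun z : ℝ => Real.exp (-a₀ * z) * psi P m a₀ a₁ X 0) atTop (nhds 0) := by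
    simpa using (Real.tendsto_exp_atBot.comp
      (tendsto_id.const_mul_atTop_of_neg (neg_neg_of_pos ha₀))).mul_const (psi P m a₀ a₁ X 0)
  refine squeeze_zero' (Eventually.of_forall fun z => (psi_pos ha₀ hm hX z).le) ?_ h1
  filter_upwards [eventually_ge_atTop 0] with z hz
  simpa using psi_upper (m := m) (a₁ := a₁) ha₀ hX hz

lemma psiInv_psi (ha₀ : 0 < a₀) (hm : m (Icc a₀ a₁) = 1) (hX : Lpos P X) (y : ℝ) :
    psiInv P m a₀ a₁ X (psi P m a₀ a₁ X y) = y := by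
  have h : {x : ℝ | psi P m a₀ a₁ X y ≤ psi P m a₀ a₁ X x} = Iic y := by
    ext x
    exact (psi_strictAnti ha₀ hm hX).le_iff_ge
  rw [psiInv, h, csSup_Iic]

lemma psi_psiInv (ha₀ : 0 < a₀) (hm : m (Icc a₀ a₁) = 1) (hX : Lpos P X) {z : ℝ} (hz : 0 < z) :
    psi P m a₀ a₁ X (psiInv P m a₀ a₁ X z) = z := by
  obtain ⟨y, rfl⟩ : z ∈ range (psi P m a₀ a₁ X) :=
    mem_range_of_exists_le_of_exists_ge (psi_continuous ha₀ hX)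
      (((psi_tendsto_atTop ha₀ hm hX).eventually_lt_const hz).exists.imp fun _ h => h.le)
      ((psi_tendsto_atBot ha₀ hm hX).eventually_ge_atTop z).exists
  rw [psiInv_psi ha₀ hm hX]

end PsiLemmas

/-- for `X* ∈ L⁰₊`, the function `ψ(y) = ∫ e^{-ay}/E[e^{-aX*}] m(da)` is
continuous and strictly decreasing with limits `∞` at `-∞` and `0` at `∞` (hence has an
inverse on `(0,∞)`, realized by `psiInv`), and the first-order condition
`[h′(X*) + λρ ≥ 0 a.s. and h′(X*) + λρ = 0 a.s. on {X* > 0}]` holds iff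
`X* = max(ψ⁻¹(λρ), 0)` a.s. -/
theorem foc_iff_psi_inverse_form (P : Measure Ω) [IsProbabilityMeasure P]
    (a₀ a₁ : ℝ) (ha₀ : 0 < a₀) (ha₀₁ : a₀ < a₁)
    (m : Measure ℝ) [IsProbabilityMeasure m] (hm : m (Set.Icc a₀ a₁) = 1)
    (ρ : Ω → ℝ) (hmρ : Measurable ρ) (hρ0 : ∀ᵐ ω ∂P, 0 < ρ ω) (hρint : Integrable ρ P)
    (lam : ℝ) (hlam : 0 < lam)
    (X : Ω → ℝ) (hX : Lpos P X) :
    Continuous (psi P m a₀ a₁ X) ∧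
    StrictAnti (psi P m a₀ a₁ X) ∧
    Tendsto (psi P m a₀ a₁ X) atBot atTop ∧
    Tendsto (psi P m a₀ a₁ X) atTop (nhds 0) ∧
    (∀ z : ℝ, 0 < z → psi P m a₀ a₁ X (psiInv P m a₀ a₁ X z) = z) ∧
    (∀ y : ℝ, psiInv P m a₀ a₁ X (psi P m a₀ a₁ X y) = y) ∧
    (((∀ᵐ ω ∂P, 0 ≤ hprime P m a₀ a₁ X ω + lam * ρ ω) ∧
        (∀ᵐ ω ∂P, 0 < X ω → hprime P m a₀ a₁ X ω + lam * ρ ω = 0)) ↔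
      (∀ᵐ ω ∂P, X ω = max (psiInv P m a₀ a₁ X (lam * ρ ω)) 0)) := by
  have hs := psi_strictAnti (a₁ := a₁) ha₀ hm hX
  refine ⟨psi_continuous ha₀ hX, hs, psi_tendsto_atBot ha₀ hm hX, psi_tendsto_atTop ha₀ hm hX,
    fun z hz => psi_psiInv ha₀ hm hX hz, psiInv_psi ha₀ hm hX, ?_⟩
  rw [← eventually_and]
  refine eventually_congr ?_
  filter_upwards [hX.2, hρ0] with ω hω hρω
  have hψ := psi_psiInv (a₁ := a₁) ha₀ hm hX (mul_pos hlam hρω)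
  set t := psiInv P m a₀ a₁ X (lam * ρ ω)
  have hh : hprime P m a₀ a₁ X ω = -psi P m a₀ a₁ X (X ω) := rfl
  have hle : 0 ≤ hprime P m a₀ a₁ X ω + lam * ρ ω ↔ t ≤ X ω := by
    rw [← hs.le_iff_ge (a := X ω), hψ, hh, ← sub_eq_neg_add, sub_nonneg]
  have heq : hprime P m a₀ a₁ X ω + lam * ρ ω = 0 ↔ t = X ω := by
    rw [← hs.injective.eq_iff (a := t), hψ, hh, ← sub_eq_neg_add, sub_eq_zero]
  rw [hle, heq]
  constructor
  · rintro ⟨h1, h2⟩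
    rcases hω.eq_or_lt with h0 | h0
    · rw [← h0] at h1 ⊢
      exact (max_eq_right h1).symm
    · rw [h2 h0, max_eq_left hω]
  · intro h
    refine ⟨h ▸ le_max_left _ _, fun h0 => ?_⟩
    rcases max_choice t 0 with h' | h'
    · exact (h.trans h').symm
    · exact absurd (h.trans h') h0.ne'
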